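/- arXiv:2202.07298 — 4 statements merged into one kernel-verified Lean document; each statement's English description precedes it below -/
import Mathlib

section
/- For all integers r ≥ 1 and s ≥ 1, the formal power series (1-x)^{rs+1} · ∑_{k≥0} ⟨k+s choose s⟩_r x^k over ℚ is a polynomial of degree at most (r-1)(s-1) with nonnegative integer coefficients (these coefficients are Sulanke's r-dimensional Narayana numbers N(r, s, j)). -/
/-- The `r`-Hoggatt binomial `⟨n choose k⟩_r = ∏_{j=0}^{r-1} C(n+j,k)/C(k+j,k)`, as a
rational number. -/
def hoggatt (r n k : ℕ) : ℚ :=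
  ∏ j ∈ Finset.range r, ((n + j).choose k : ℚ) / ((k + j).choose k : ℚ)

/-!
MacMahon's product `⟨k+s choose s⟩_r = ∏_{i<r, j<s} (k+i+j+1)/(i+j+1)` drives both halves of the
argument.

*Nonnegativity and degree.* If `(1-x)^{d+1} ∑ p(k) x^k` has coefficients `h_j`, then
`(1-x)^{d+2} ∑ (k+a) p(k) x^k` has coefficients `(j+a) h_j + (d+2-j-a) h_{j-1}`. So if `h` is
nonnegative of degree at most `e` and `a ≤ d-e+1`, then multiplying `p(k)` by `k+a` keeps the
numerator nonnegative and raises both `d` and `e` by one. The hook `i = 0` or `j = s-1` of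
MacMahon's product is `C(k+r+s-1, r+s-1)`, for which `h = 1`, `d = r+s-1` and `e = 0`. Each of the
`(r-1)(s-1)` remaining factors has `a = i+j+1 < r+s = d-e+1`, so the step applies to all of them.

*Integrality.* The Vandermonde determinant of `0, …, r-1, r+k, …, r+k+s-1` is divisible by the one
of `0, …, r+s-1`, a superfactorial, and their quotient is MacMahon's product.
-/

open Finset PowerSeries

section GenFunNumerator

variable {R : Type*} [CommRing R]

/-- The numerator `h` in `∑ₖ p(k) xᵏ = h / (1 - x) ^ (d + 1)`, as a power series. It is a polynomial
when `p` is given by a polynomial of degree at most `d`. -/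
noncomputable def genFunNumerator (d : ℕ) (p : ℕ → R) : R⟦X⟧ :=
  (1 - X) ^ (d + 1) * PowerSeries.mk p

theorem genFunNumerator_const_mul (d : ℕ) (c : R) (p : ℕ → R) :
    genFunNumerator d (fun k => c * p k) = C c * genFunNumerator d p := by
  have mk_const_mul : (PowerSeries.mk fun k => c * p k) = C c * PowerSeries.mk p := by ext; simp
  rw [genFunNumerator, genFunNumerator, mk_const_mul, mul_left_comm]

theorem map_genFunNumerator {S : Type*} [CommRing S] (f : R →+* S) (d : ℕ) (p : ℕ → R) :
    PowerSeries.map f (genFunNumerator d p) = genFunNumerator d fun k => f (p k) := by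
  have map_mk : PowerSeries.map f (PowerSeries.mk p) = PowerSeries.mk fun k => f (p k) := by
    ext; simp
  simp only [genFunNumerator, map_mul, map_pow, map_sub, map_one, map_X, map_mk]

theorem coeff_X_mul_derivative (f : R⟦X⟧) (n : ℕ) : coeff n (X * d⁄dX R f) = n * coeff n f := by
  cases n with
  | zero => simp
  | succ n => rw [coeff_succ_X_mul, coeff_derivative, mul_comm]; norm_cast

theorem powerSeries_mk_add_mul (a : R) (p : ℕ → R) :
    (PowerSeries.mk fun k => (k + a) * p k) =
      X * d⁄dX R (PowerSeries.mk p) + C a * PowerSeries.mk p := by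
  ext n
  rw [map_add, coeff_X_mul_derivative, coeff_C_mul, coeff_mk, coeff_mk, add_mul]

theorem genFunNumerator_add_mul (d : ℕ) (a : R) (p : ℕ → R) :
    genFunNumerator (d + 1) (fun k => (k + a) * p k) =
      (1 - X) * (X * d⁄dX R (genFunNumerator d p)) +
        C (d + 1 : R) * (X * genFunNumerator d p) +
        C a * ((1 - X) * genFunNumerator d p) := by
  simp only [genFunNumerator, powerSeries_mk_add_mul, Derivation.leibniz, Derivation.leibniz_pow,
    map_sub, Derivation.map_one_eq_zero, derivative_X, smul_eq_mul, nsmul_eq_mul, map_add,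
    map_natCast, map_one]
  push_cast
  ring

theorem coeff_zero_genFunNumerator_add_mul (d : ℕ) (a : R) (p : ℕ → R) :
    coeff 0 (genFunNumerator (d + 1) fun k => (k + a) * p k) =
      a * coeff 0 (genFunNumerator d p) := by
  simp [genFunNumerator_add_mul]

theorem coeff_succ_genFunNumerator_add_mul (d : ℕ) (a : R) (p : ℕ → R) (n : ℕ) :
    coeff (n + 1) (genFunNumerator (d + 1) fun k => (k + a) * p k) =
      (n + 1 + a) * coeff (n + 1) (genFunNumerator d p) +
        (d + 1 - (n + a)) * coeff n (genFunNumerator d p) := by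
  simp only [genFunNumerator_add_mul, map_add (coeff (n + 1)), coeff_C_mul, sub_mul, one_mul,
    map_sub, coeff_X_mul_derivative]
  simp only [coeff_succ_X_mul, coeff_X_mul_derivative]
  push_cast
  ring

theorem genFunNumerator_choose (d : ℕ) :
    genFunNumerator d (fun k => ((k + d).choose d : R)) = 1 := by
  rw [genFunNumerator, mul_comm]
  simpa only [add_comm] using mk_add_choose_mul_one_sub_pow_eq_one R d

end GenFunNumerator

/-- The numerator `(1 - x) ^ (d + 1) ∑ₖ p(k) xᵏ` is a polynomial of degree at most `e` with
nonnegative coefficients. The two indices are kept apart because the factors `k + a` that may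
multiply `p` are limited by `d - e`. -/
structure HasNonnegNumerator {R : Type*} [CommRing R] [LE R] (d e : ℕ) (p : ℕ → R) : Prop where
  coeff_nonneg : ∀ j, 0 ≤ coeff j (genFunNumerator d p)
  coeff_eq_zero : ∀ j, e < j → coeff j (genFunNumerator d p) = 0

namespace HasNonnegNumerator

section OrderedRing

variable {R : Type*} [CommRing R] [PartialOrder R] [IsOrderedRing R] {d e : ℕ} {p : ℕ → R}

theorem add_choose (d : ℕ) : HasNonnegNumerator d 0 fun k => ((k + d).choose d : R) where
  coeff_nonneg j := by
    rw [genFunNumerator_choose, coeff_one]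
    split_ifs
    exacts [zero_le_one, le_rfl]
  coeff_eq_zero j hj := by
    rw [genFunNumerator_choose, coeff_one, if_neg hj.ne']

theorem const_mul {c : R} (hc : 0 ≤ c) (h : HasNonnegNumerator d e p) :
    HasNonnegNumerator d e fun k => c * p k where
  coeff_nonneg j := by
    rw [genFunNumerator_const_mul, coeff_C_mul]
    exact mul_nonneg hc (h.coeff_nonneg j)
  coeff_eq_zero j hj := by
    rw [genFunNumerator_const_mul, coeff_C_mul, h.coeff_eq_zero j hj, mul_zero]

theorem add_natCast_mul {a : ℕ} (h : HasNonnegNumerator d e p) (ha : e + a ≤ d + 1) :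
    HasNonnegNumerator (d + 1) (e + 1) fun k => (k + a) * p k where
  coeff_nonneg j := by
    cases j with
    | zero =>
      rw [coeff_zero_genFunNumerator_add_mul]
      exact mul_nonneg a.cast_nonneg (h.coeff_nonneg 0)
    | succ n =>
      rw [coeff_succ_genFunNumerator_add_mul]
      refine add_nonneg (mul_nonneg (mod_cast (n + 1 + a).cast_nonneg) (h.coeff_nonneg _)) ?_
      rcases lt_or_ge e n with hn | hn
      · rw [h.coeff_eq_zero n hn, mul_zero]
      · have n_add_a_le : (n + a : R) ≤ d + 1 := by
          exact_mod_cast Nat.mono_cast (α := R) (by lia : n + a ≤ d + 1)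
        exact mul_nonneg (sub_nonneg.2 n_add_a_le) (h.coeff_nonneg n)
  coeff_eq_zero j hj := by
    cases j with
    | zero => lia
    | succ n =>
      rw [coeff_succ_genFunNumerator_add_mul, h.coeff_eq_zero n (by lia),
        h.coeff_eq_zero (n + 1) (by lia), mul_zero, mul_zero, add_zero]

end OrderedRing

theorem prod_add_div_mul {K ι : Type*} [Field K] [LinearOrder K] [IsStrictOrderedRing K]
    {d e : ℕ} {p : ℕ → K} (h : HasNonnegNumerator d e p) (t : Finset ι) (a : ι → ℕ)
    (ha : ∀ i ∈ t, e + a i ≤ d + 1) :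
    HasNonnegNumerator (d + #t) (e + #t) fun k => (∏ i ∈ t, (k + a i : K) / a i) * p k := by
  induction t using Finset.cons_induction with
  | empty => simpa using h
  | cons i t hi ih =>
    rw [forall_mem_cons] at ha
    have step := ((ih ha.2).add_natCast_mul (a := a i) (by lia)).const_mul
      (inv_nonneg.2 (a i).cast_nonneg)
    simpa only [prod_cons, card_cons, ← add_assoc, div_eq_inv_mul, mul_assoc] using step

theorem exists_polynomial_nat {R : Type*} [CommRing R] [PartialOrder R] [IsStrictOrderedRing R]
    {d e : ℕ} {q : ℕ → ℤ} (h : HasNonnegNumerator d e fun k => (q k : R)) :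
    ∃ A : Polynomial ℕ, A.natDegree ≤ e ∧
      genFunNumerator d (fun k => (q k : R)) = (A.map (Nat.castRingHom R) : R⟦X⟧) := by
  have coeff_cast (j : ℕ) : coeff j (genFunNumerator d fun k => (q k : R)) =
      (coeff j (genFunNumerator d q) : ℤ) :=
    (congrArg (coeff j) (map_genFunNumerator (Int.castRingHom R) d q)).symm
  let A : Polynomial ℕ :=
    trunc (e + 1) (PowerSeries.mk fun j => (coeff j (genFunNumerator d q)).toNat)
  refine ⟨A, Nat.lt_succ_iff.1 (natDegree_trunc_lt _ e), ?_⟩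
  ext j
  rw [Polynomial.coeff_coe, Polynomial.coeff_map, coeff_trunc, coeff_mk]
  split_ifs with hj
  · have coeff_nonneg : 0 ≤ coeff j (genFunNumerator d q) := by
      simpa only [coeff_cast, Int.cast_nonneg_iff] using h.coeff_nonneg j
    rw [coeff_cast, eq_natCast, ← Int.cast_natCast, Int.toNat_of_nonneg coeff_nonneg]
  · rw [h.coeff_eq_zero j (by lia), map_zero]

end HasNonnegNumerator

section Vandermonde

variable {R : Type*} [CommRing R]

theorem det_vandermonde_append {m n : ℕ} (v : Fin m → R) (w : Fin n → R) :
    (Matrix.vandermonde (Fin.append v w)).det =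
      (Matrix.vandermonde v).det * (Matrix.vandermonde w).det * ∏ i, ∏ j, (w j - v i) := by
  have prod_Ioi {l : ℕ} (i : Fin l) (f : Fin l → R) :
      ∏ j ∈ Ioi i, f j = ∏ j, if i < j then f j else 1 := by
    rw [← prod_filter, filter_lt_eq_Ioi]
  have castAdd_lt_natAdd (i : Fin m) (j : Fin n) : Fin.castAdd n i < Fin.natAdd m j :=
    Fin.lt_def.2 (i.isLt.trans_le (Nat.le_add_right m j))
  simp only [Matrix.det_vandermonde, prod_Ioi, Fin.prod_univ_add, Fin.append_left,
    Fin.append_right, castAdd_lt_natAdd, (castAdd_lt_natAdd _ _).not_gt, if_true, if_false,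
    prod_const_one, prod_mul_distrib, Fin.natAdd_lt_natAdd_iff,
    (Fin.strictMono_castAdd n).lt_iff_lt]
  ring

theorem det_vandermonde_append_add (r s : ℕ) (k : R) :
    (Matrix.vandermonde (Fin.append (fun i : Fin r => (i : R)) fun j : Fin s => j + (r + k))).det =
      (Matrix.vandermonde fun i : Fin r => (i : R)).det *
        (Matrix.vandermonde fun j : Fin s => (j : R)).det *
        ∏ i ∈ range r, ∏ j ∈ range s, (k + i + j + 1) := by
  rw [det_vandermonde_append, Matrix.det_vandermonde_add]
  congr 1
  simp only [prod_range]
  rw [← Equiv.prod_comp Fin.revPerm]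
  refine prod_congr rfl fun i _ => prod_congr rfl fun j _ => ?_
  rw [Fin.revPerm_apply, Fin.val_rev, Nat.cast_sub i.isLt]
  push_cast
  ring

theorem append_natCast_natCast_add (r s : ℕ) :
    Fin.append (fun i : Fin r => (i : R)) (fun j : Fin s => (j + r : R)) =
      fun i : Fin (r + s) => (i : R) := by
  ext i
  cases i using Fin.addCases <;> simp [add_comm]

theorem det_vandermonde_natCast_ne_zero [IsDomain R] [CharZero R] (n : ℕ) :
    (Matrix.vandermonde fun i : Fin n => (i : R)).det ≠ 0 :=
  Matrix.det_vandermonde_ne_zero_iff.2 (Nat.cast_injective.comp Fin.val_injective)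

end Vandermonde

theorem prod_prod_dvd_prod_prod_add (r s : ℕ) (k : ℤ) :
    ∏ i ∈ range r, ∏ j ∈ range s, (i + j + 1 : ℤ) ∣
      ∏ i ∈ range r, ∏ j ∈ range s, (k + i + j + 1) := by
  rcases s with _ | s
  · simp
  let c := (Matrix.vandermonde fun i : Fin r => (i : ℤ)).det *
    (Matrix.vandermonde fun j : Fin (s + 1) => (j : ℤ)).det
  have c_ne_zero : c ≠ 0 := mul_ne_zero (det_vandermonde_natCast_ne_zero r)
    (det_vandermonde_natCast_ne_zero (s + 1))
  have superFactorial_eq :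
      ((r + s).superFactorial : ℤ) = c * ∏ i ∈ range r, ∏ j ∈ range (s + 1), (i + j + 1 : ℤ) := by
    have det_zero := det_vandermonde_append_add (R := ℤ) r (s + 1) 0
    simp only [add_zero, append_natCast_natCast_add, zero_add] at det_zero
    exact (Matrix.det_vandermonde_id_eq_superFactorial (r + s)).symm.trans det_zero
  rw [← mul_dvd_mul_iff_left c_ne_zero, ← superFactorial_eq, ← det_vandermonde_append_add]
  exact Matrix.superFactorial_dvd_vandermonde_det (n := r + s) _

theorem choose_div_choose_eq_prod {K : Type*} [Field K] [CharZero K] (m n s : ℕ) :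
    ((m + s).choose s : K) / ((n + s).choose s : K) =
      ∏ j ∈ range s, (m + j + 1 : K) / (n + j + 1) := by
  have factorial_mul_choose (l : ℕ) :
      (s.factorial : K) * (l + s).choose s = ∏ j ∈ range s, (l + j + 1 : K) := by
    rw [← Nat.cast_mul, ← Nat.ascFactorial_eq_factorial_mul_choose, Nat.ascFactorial_eq_prod_range,
      Nat.cast_prod]
    refine prod_congr rfl fun j _ => ?_
    push_cast
    ring
  rw [prod_div_distrib, ← factorial_mul_choose, ← factorial_mul_choose,
    mul_div_mul_left _ _ (Nat.cast_ne_zero.2 s.factorial_ne_zero)]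

theorem add_choose_eq_prod {K : Type*} [Field K] [CharZero K] (k n : ℕ) :
    ((k + n).choose n : K) = ∏ t ∈ range n, (k + t + 1 : K) / (t + 1) := by
  simpa using choose_div_choose_eq_prod (K := K) k 0 n

theorem prod_range_succ_prod_range_succ {M : Type*} [CommMonoid M] (f : ℕ → M) (m n : ℕ) :
    ∏ i ∈ range (m + 1), ∏ j ∈ range (n + 1), f (i + j) =
      (∏ i ∈ range m, ∏ j ∈ range n, f (i + j + 1)) * ∏ t ∈ range (n + 1 + m), f t := by
  have row (i : ℕ) : ∏ j ∈ range (n + 1), f (i + 1 + j) =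
      (∏ j ∈ range n, f (i + j + 1)) * f (n + 1 + i) := by
    rw [prod_range_succ]
    grind
  calc ∏ i ∈ range (m + 1), ∏ j ∈ range (n + 1), f (i + j)
      = (∏ i ∈ range m, (∏ j ∈ range n, f (i + j + 1)) * f (n + 1 + i)) *
          ∏ j ∈ range (n + 1), f j := by
        rw [prod_range_succ', prod_congr rfl fun i _ => row i]
        simp only [zero_add]
    _ = (∏ i ∈ range m, ∏ j ∈ range n, f (i + j + 1)) * ∏ t ∈ range (n + 1 + m), f t := by
        rw [prod_mul_distrib, prod_range_add f (n + 1) m, mul_assoc, mul_comm (∏ i ∈ range m, f _)]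

theorem hoggatt_eq_prod (r s k : ℕ) :
    hoggatt r (k + s) s = ∏ i ∈ range r, ∏ j ∈ range s, (k + i + j + 1 : ℚ) / (i + j + 1) := by
  refine prod_congr rfl fun i _ => ?_
  rw [add_right_comm, add_comm s i, choose_div_choose_eq_prod, Nat.cast_add]

theorem exists_int_eq_hoggatt (r s k : ℕ) : ∃ z : ℤ, hoggatt r (k + s) s = z := by
  obtain ⟨z, hz⟩ := prod_prod_dvd_prod_prod_add r s k
  refine ⟨z, ?_⟩
  have denominator_ne_zero : ∏ i ∈ range r, ∏ j ∈ range s, (i + j + 1 : ℚ) ≠ 0 :=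
    prod_ne_zero_iff.2 fun i _ => prod_ne_zero_iff.2 fun j _ => by positivity
  simp only [hoggatt_eq_prod, prod_div_distrib]
  rw [div_eq_iff denominator_ne_zero, mul_comm]
  exact_mod_cast hz

theorem hoggatt_succ_eq_prod_mul_choose (r s k : ℕ) :
    hoggatt (r + 1) (k + (s + 1)) (s + 1) =
      (∏ x ∈ range r ×ˢ range s, (k + (x.1 + x.2 + 2 : ℕ) : ℚ) / (x.1 + x.2 + 2 : ℕ)) *
        (k + (s + 1 + r)).choose (s + 1 + r) := by
  have split_hook := prod_range_succ_prod_range_succ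
    (fun t => (k + t + 1 : ℚ) / (t + 1)) r s
  rw [hoggatt_eq_prod, add_choose_eq_prod, prod_product]
  simpa only [Nat.cast_add, Nat.cast_one, Nat.cast_ofNat, ← one_add_one_eq_two, add_assoc]
    using split_hook

theorem hasNonnegNumerator_hoggatt (r s : ℕ) :
    HasNonnegNumerator ((r + 1) * (s + 1)) (r * s)
      fun k => hoggatt (r + 1) (k + (s + 1)) (s + 1) := by
  have hook : HasNonnegNumerator (s + 1 + r) 0 fun k =>
      ((k + (s + 1 + r)).choose (s + 1 + r) : ℚ) := .add_choose _
  have full := hook.prod_add_div_mul (range r ×ˢ range s) (fun x => x.1 + x.2 + 2) (by grind)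
  have degree_eq : (r + 1) * (s + 1) = s + 1 + r + r * s := by ring
  simpa only [degree_eq, ← hoggatt_succ_eq_prod_mul_choose, card_product, card_range, zero_add]
    using full

/-- For `r, s ≥ 1`, the formal power series `(1-x)^{rs+1} ∑_{k≥0} ⟨k+s choose s⟩_r x^k`
over `ℚ` is a polynomial of degree at most `(r-1)(s-1)` with nonnegative integer
coefficients (Sulanke's `r`-dimensional Narayana numbers `N(r,s,j)`). -/
theorem genFun_hoggatt_column_is_narayana_poly (r s : ℕ) (hr : 1 ≤ r) (hs : 1 ≤ s) :
    ∃ A : Polynomial ℕ, A.natDegree ≤ (r - 1) * (s - 1) ∧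
      (1 - PowerSeries.X) ^ (r * s + 1) *
          PowerSeries.mk (fun k => hoggatt r (k + s) s) =
        ((A.map (Nat.castRingHom ℚ)) : PowerSeries ℚ) := by
  obtain ⟨a, rfl⟩ := Nat.exists_eq_add_of_le' hr
  obtain ⟨b, rfl⟩ := Nat.exists_eq_add_of_le' hs
  choose q hq using exists_int_eq_hoggatt (a + 1) (b + 1)
  have nonneg_numerator := hasNonnegNumerator_hoggatt a b
  simp only [hq] at nonneg_numerator ⊢
  exact nonneg_numerator.exists_polynomial_nat
end

section
/- Let p be a polynomial with rational coefficients of degree exactly m, and let r be an integer with 1 ≤ r ≤ m+1. Then there exists a polynomial q over ℚ of degree exactly r(m-r+1) such that for every rational number x, det((p(x+i+j))_{i,j=0}^{r-1}) = q(x); that is, the r×r Hankel determinant of the polynomial sequence is itself a polynomial in the starting index, of degree r(m-r+1). -/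
/-!
Work with the matrix over `R[X]` whose `(i, j)` entry is the translate `p(X + i + j)`.
By the Gregory–Newton formula it factors as `L * D * Lᵀ`, with `L` the unipotent Pascal matrix and
`D` the Hankel matrix of the iterated differences `Δᵏ p`, so both have the same determinant.
Each `Xᵏ Δᵏ p` has degree at most `m`, with `m`-th coefficient `m (m - 1) ⋯ (m - k + 1)` times that
of `p`. Scaling row `i` by `Xⁱ` and column `j` by `Xʲ` multiplies the determinant by
`X ^ (r (r - 1))` and makes all entries of degree at most `m`, so the coefficient at `r m` of the
scaled determinant is the determinant of the `m`-th coefficients. That is a Hankel determinant of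
falling factorials, which reduces to a Vandermonde determinant and does not vanish.
-/

open Polynomial
open scoped fwdDiff

section HankelMatrix

variable {R : Type*}

/-- The `r × r` Hankel matrix of a sequence, with rows and columns indexed from `0`. -/
def hankelMatrix (r : ℕ) (a : ℕ → R) : Matrix (Fin r) (Fin r) R :=
  .of fun i j ↦ a (i + j)

@[simp]
theorem hankelMatrix_apply (r : ℕ) (a : ℕ → R) (i j : Fin r) :
    hankelMatrix r a i j = a (i + j) :=
  rfl

@[simp]
theorem hankelMatrix_map {S : Type*} (r : ℕ) (a : ℕ → R) (f : R → S) :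
    (hankelMatrix r a).map f = hankelMatrix r fun n ↦ f (a n) :=
  rfl

variable [CommRing R]

theorem det_hankelMatrix_const_mul (r : ℕ) (c : R) (a : ℕ → R) :
    (hankelMatrix r fun n ↦ c * a n).det = c ^ r * (hankelMatrix r a).det := by
  have smul_eq : (hankelMatrix r fun n ↦ c * a n) = c • hankelMatrix r a := rfl
  rw [smul_eq, Matrix.det_smul, Fintype.card_fin]

theorem det_hankelMatrix_pow_mul (r : ℕ) (c : R) (a : ℕ → R) :
    (hankelMatrix r fun n ↦ c ^ n * a n).det = c ^ (r * (r - 1)) * (hankelMatrix r a).det := by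
  have scaled : (hankelMatrix r fun n ↦ c ^ n * a n) =
      .of fun i j ↦ c ^ (i : ℕ) *
        (Matrix.of fun i j : Fin r ↦ c ^ (j : ℕ) * hankelMatrix r a i j) i j := by
    ext i j
    simp [pow_add, mul_assoc]
  rw [scaled, Matrix.det_mul_column, Matrix.det_mul_row, ← mul_assoc, Finset.prod_pow_eq_pow_sum,
    ← pow_add, Fin.sum_univ_eq_sum_range (fun i ↦ i) r, ← mul_two, Finset.sum_range_id_mul_two]

end HankelMatrix

section BinomialTransform

/-- The lower triangular Pascal matrix, whose `(i, j)` entry is the binomial coefficient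
`i.choose j`; it expresses the values of a sequence through its iterated differences. -/
def pascalMatrix (R : Type*) [NatCast R] (r : ℕ) : Matrix (Fin r) (Fin r) R :=
  .of fun i j ↦ ((i : ℕ).choose j : R)

variable {M R : Type*} [AddCommMonoid M] [CommRing R]

theorem det_pascalMatrix (r : ℕ) : (pascalMatrix R r).det = 1 := by
  have lower : (pascalMatrix R r).IsLowerTriangular := fun i j (hij : i < j) ↦ by
    simp [pascalMatrix, Nat.choose_eq_zero_of_lt (Fin.lt_def.mp hij)]
  rw [Matrix.det_of_isLowerTriangular _ lower]
  simp [pascalMatrix]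

theorem shift_eq_sum_pascalMatrix_mul_fwdDiff_iter {r : ℕ} (f : M → R) (y h : M) (i : Fin r) :
    f (y + (i : ℕ) • h) = ∑ k : Fin r, pascalMatrix R r i k * Δ_[h] ^[k] f y := by
  simp only [pascalMatrix, Matrix.of_apply, ← nsmul_eq_mul]
  rw [shift_eq_sum_fwdDiff_iter h f i y,
    Fin.sum_univ_eq_sum_range (fun k ↦ (i : ℕ).choose k • Δ_[h] ^[k] f y) r]
  refine Finset.sum_subset (Finset.range_subset_range.mpr i.isLt) fun k _ hk ↦ ?_
  rw [Nat.choose_eq_zero_of_lt (by simpa using hk), zero_smul]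

theorem hankelMatrix_shift_eq_pascalMatrix_mul (r : ℕ) (f : M → R) (y h : M) :
    (hankelMatrix r fun n ↦ f (y + n • h)) =
      pascalMatrix R r * (hankelMatrix r fun n ↦ Δ_[h] ^[n] f y) *
        (pascalMatrix R r).transpose := by
  ext i j
  calc f (y + (i + j : ℕ) • h)
    _ = ∑ k, pascalMatrix R r j k * Δ_[h] ^[k] f (y + (i : ℕ) • h) := by
      rw [add_smul, ← add_assoc, shift_eq_sum_pascalMatrix_mul_fwdDiff_iter f]
    _ = ∑ k, pascalMatrix R r j k * ∑ l, pascalMatrix R r i l * Δ_[h] ^[l + k] f y := by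
      simp only [shift_eq_sum_pascalMatrix_mul_fwdDiff_iter _ y h i, Function.iterate_add_apply]
    _ = _ := by simp only [Matrix.mul_apply, Matrix.transpose_apply, hankelMatrix_apply, mul_comm]

theorem det_hankelMatrix_shift_eq_det_hankelMatrix_fwdDiff_iter (r : ℕ) (f : M → R) (y h : M) :
    (hankelMatrix r fun n ↦ f (y + n • h)).det =
      (hankelMatrix r fun n ↦ Δ_[h] ^[n] f y).det := by
  rw [hankelMatrix_shift_eq_pascalMatrix_mul, Matrix.det_mul, Matrix.det_mul,
    Matrix.det_transpose, det_pascalMatrix, one_mul, mul_one]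

end BinomialTransform

section Differences

theorem map_fwdDiff_iter {M G H F : Type*} [AddCommMonoid M] [AddCommGroup G] [AddCommGroup H]
    [FunLike F G H] [AddMonoidHomClass F G H] (φ : F) (h : M) (f : M → G) (n : ℕ) (y : M) :
    φ (Δ_[h] ^[n] f y) = Δ_[h] ^[n] (fun x ↦ φ (f x)) y := by
  simp only [fwdDiff_iter_eq_sum_shift, map_sum, map_zsmul]

variable {R : Type*} [CommRing R]

theorem fwdDiff_iter_eval_of_natDegree_le {p : R[X]} {n : ℕ} (hp : p.natDegree ≤ n) (x : R) :
    Δ_[1] ^[n] p.eval x = p.coeff n * n.factorial := by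
  rcases hp.lt_or_eq with hlt | rfl
  · simp [fwdDiff_iter_eq_zero_of_degree_lt hlt, coeff_eq_zero_of_natDegree_lt hlt]
  · simp [fwdDiff_iter_degree_eq_factorial]

-- The `n`-th coefficient of `taylor x p` is the `n`-th Hasse derivative of `p` at `x`, a polynomial
-- function of `x` of degree at most `k`.
theorem coeff_fwdDiff_iter_taylor {p : R[X]} {n k : ℕ} (hp : p.natDegree ≤ n + k) (x : R) :
    (Δ_[1] ^[k] (fun y ↦ taylor y p) x).coeff n = (n + k).descFactorial k * p.coeff (n + k) := by
  have hasse_degree : (hasseDeriv n p).natDegree ≤ k :=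
    (natDegree_hasseDeriv_le p n).trans (by lia)
  calc (Δ_[1] ^[k] (fun y ↦ taylor y p) x).coeff n
    _ = Δ_[1] ^[k] (hasseDeriv n p).eval x := by
      rw [← lcoeff_apply, map_fwdDiff_iter]
      simp only [lcoeff_apply, taylor_coeff]
    _ = (k + n).choose n * p.coeff (k + n) * k.factorial := by
      rw [fwdDiff_iter_eval_of_natDegree_le hasse_degree, hasseDeriv_coeff]
    _ = (n + k).descFactorial k * p.coeff (n + k) := by
      rw [Nat.descFactorial_eq_factorial_mul_choose, add_comm k n, Nat.choose_symm_add]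
      push_cast
      ring

theorem coeff_X_pow_mul_fwdDiff_iter_taylor {p : R[X]} {m : ℕ} (hp : p.natDegree ≤ m) (k : ℕ)
    (x : R) :
    (X ^ k * Δ_[1] ^[k] (fun y ↦ taylor y p) x).coeff m = p.coeff m * m.descFactorial k := by
  rw [coeff_X_pow_mul']
  split_ifs with hk
  · obtain ⟨n, rfl⟩ := Nat.exists_eq_add_of_le' hk
    rw [Nat.add_sub_cancel, coeff_fwdDiff_iter_taylor hp, mul_comm]
  · rw [Nat.descFactorial_of_lt (by lia), Nat.cast_zero, mul_zero]

theorem natDegree_X_pow_mul_fwdDiff_iter_taylor_le (p : R[X]) (k : ℕ) (x : R) :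
    (X ^ k * Δ_[1] ^[k] (fun y ↦ taylor y p) x).natDegree ≤ p.natDegree := by
  refine natDegree_le_iff_coeff_eq_zero.mpr fun n hn ↦ ?_
  rw [coeff_X_pow_mul_fwdDiff_iter_taylor hn.le, coeff_eq_zero_of_natDegree_lt hn, zero_mul]

end Differences

section DetOfPolynomials

variable {ι R : Type*} [Fintype ι] [DecidableEq ι] [CommRing R]

theorem natDegree_det_le_of_forall_natDegree_le {A : Matrix ι ι R[X]} {d : ℕ}
    (hA : ∀ i j, (A i j).natDegree ≤ d) : A.det.natDegree ≤ Fintype.card ι * d := by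
  rw [Matrix.det_apply]
  refine natDegree_sum_le_of_forall_le _ _ fun σ _ ↦ (natDegree_smul_le _ _).trans ?_
  calc (∏ i, A (σ i) i).natDegree
    _ ≤ ∑ i, (A (σ i) i).natDegree := natDegree_prod_le _ _
    _ ≤ ∑ _ : ι, d := Finset.sum_le_sum fun i _ ↦ hA (σ i) i
    _ = Fintype.card ι * d := by simp

theorem coeff_det_of_forall_natDegree_le {A : Matrix ι ι R[X]} {d : ℕ}
    (hA : ∀ i j, (A i j).natDegree ≤ d) :
    A.det.coeff (Fintype.card ι * d) = (A.map fun q ↦ q.coeff d).det := by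
  simp only [Matrix.det_apply, finsetSum_coeff, coeff_smul, Matrix.map_apply]
  refine Finset.sum_congr rfl fun σ _ ↦ ?_
  rw [← Finset.card_univ, coeff_prod_of_natDegree_le _ _ _ fun i _ ↦ hA (σ i) i]

theorem natDegree_det_hankelMatrix_le (r : ℕ) {a : ℕ → R[X]} {d : ℕ}
    (ha : ∀ n, (a n).natDegree ≤ d) : (hankelMatrix r a).det.natDegree ≤ r * d := by
  simpa using natDegree_det_le_of_forall_natDegree_le (A := hankelMatrix r a) fun _ _ ↦ ha _

theorem coeff_det_hankelMatrix (r : ℕ) {a : ℕ → R[X]} {d : ℕ} (ha : ∀ n, (a n).natDegree ≤ d) :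
    (hankelMatrix r a).det.coeff (r * d) = (hankelMatrix r fun n ↦ (a n).coeff d).det := by
  simpa using coeff_det_of_forall_natDegree_le (A := hankelMatrix r a) fun _ _ ↦ ha _

end DetOfPolynomials

section FallingFactorials

variable {R : Type*} {m : ℕ}

theorem natCast_descFactorial_ne_zero_of_factorial_ne_zero [Semiring R]
    (hm : (m.factorial : R) ≠ 0) {k : ℕ} (hk : k ≤ m) : (m.descFactorial k : R) ≠ 0 :=
  ne_zero_of_dvd_ne_zero hm <| Nat.cast_dvd_cast <|
    Dvd.intro_left _ (Nat.factorial_mul_descFactorial hk)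

theorem natCast_injOn_Iic_of_factorial_ne_zero [Ring R] (hm : (m.factorial : R) ≠ 0) :
    Set.InjOn (Nat.cast : ℕ → R) (Set.Iic m) := by
  intro i hi j hj hij
  wlog hlt : i < j generalizing i j
  · rcases (not_lt.mp hlt).eq_or_lt with heq | hgt
    exacts [heq.symm, (this hj hi hij.symm hgt).symm]
  have dvd_factorial : j - i ∣ m.factorial :=
    Nat.dvd_factorial (Nat.sub_pos_of_lt hlt) ((Nat.sub_le j i).trans hj)
  have cast_sub_eq_zero : ((j - i : ℕ) : R) = 0 := by rw [Nat.cast_sub hlt.le, hij, sub_self]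
  exact absurd cast_sub_eq_zero (ne_zero_of_dvd_ne_zero hm (Nat.cast_dvd_cast dvd_factorial))

variable [CommRing R] [IsDomain R]

theorem det_hankelMatrix_descPochhammer (r : ℕ) (x : R) :
    (hankelMatrix r fun n ↦ (descPochhammer R n).eval x).det =
      (∏ i : Fin r, (descPochhammer R i).eval x) *
        (Matrix.vandermonde fun i : Fin r ↦ x - (i : ℕ)).det := by
  have row_factored : (hankelMatrix r fun n ↦ (descPochhammer R n).eval x) =
      .of fun i j ↦ (descPochhammer R i).eval x *
        (Matrix.of fun i j : Fin r ↦ (descPochhammer R j).eval (x - (i : ℕ))) i j := by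
    ext i j
    simp [← descPochhammer_mul]
  rw [row_factored, Matrix.det_mul_column,
    ← Matrix.det_eval_matrixOfPolynomials_eq_det_vandermonde _ (fun j : Fin r ↦ descPochhammer R j)
      (fun _ ↦ descPochhammer_natDegree R _) fun _ ↦ monic_descPochhammer R _]

theorem det_hankelMatrix_descFactorial_ne_zero (hm : (m.factorial : R) ≠ 0) {r : ℕ}
    (hr : r ≤ m + 1) : (hankelMatrix r fun n ↦ (m.descFactorial n : R)).det ≠ 0 := by
  simp only [← descPochhammer_eval_eq_descFactorial, det_hankelMatrix_descPochhammer]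
  refine mul_ne_zero (Finset.prod_ne_zero_iff.mpr fun i _ ↦ ?_)
    (Matrix.det_vandermonde_ne_zero_iff.mpr fun i j hij ↦ Fin.ext ?_)
  · rw [descPochhammer_eval_eq_descFactorial]
    exact natCast_descFactorial_ne_zero_of_factorial_ne_zero hm (by lia)
  · exact natCast_injOn_Iic_of_factorial_ne_zero hm (Set.mem_Iic.mpr (by lia))
      (Set.mem_Iic.mpr (by lia)) (sub_right_injective hij)

end FallingFactorials

section HankelDeterminant

/-- The `r × r` Hankel determinant of the translates `p(X), p(X + 1), p(X + 2), …`, whose value at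
`x` is the Hankel determinant of `p(x), p(x + 1), p(x + 2), …`. -/
noncomputable def hankelDetPolynomial {R : Type*} [CommRing R] (r : ℕ) (p : R[X]) : R[X] :=
  (hankelMatrix r fun n ↦ taylor (n : R) p).det

variable {R : Type*} [CommRing R]

theorem eval_hankelDetPolynomial (r : ℕ) (p : R[X]) (x : R) :
    (hankelDetPolynomial r p).eval x =
      (Matrix.of fun i j : Fin r ↦ p.eval (x + i.1 + j.1)).det := by
  rw [hankelDetPolynomial, ← coe_evalRingHom, RingHom.map_det]
  congr 1
  ext i j
  simp [taylor_eval, add_assoc]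

theorem X_pow_mul_hankelDetPolynomial (r : ℕ) (p : R[X]) :
    X ^ (r * (r - 1)) * hankelDetPolynomial r p =
      (hankelMatrix r fun n ↦ X ^ n * Δ_[1] ^[n] (fun y ↦ taylor y p) (0 : R)).det := by
  rw [det_hankelMatrix_pow_mul, ← det_hankelMatrix_shift_eq_det_hankelMatrix_fwdDiff_iter]
  simp only [hankelDetPolynomial, zero_add, nsmul_one]

theorem natDegree_X_pow_mul_hankelDetPolynomial_le (r : ℕ) (p : R[X]) :
    (X ^ (r * (r - 1)) * hankelDetPolynomial r p).natDegree ≤ r * p.natDegree := by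
  rw [X_pow_mul_hankelDetPolynomial]
  exact natDegree_det_hankelMatrix_le r fun n ↦ natDegree_X_pow_mul_fwdDiff_iter_taylor_le p n 0

theorem coeff_X_pow_mul_hankelDetPolynomial (r : ℕ) (p : R[X]) :
    (X ^ (r * (r - 1)) * hankelDetPolynomial r p).coeff (r * p.natDegree) =
      p.leadingCoeff ^ r * (hankelMatrix r fun n ↦ (p.natDegree.descFactorial n : R)).det := by
  rw [X_pow_mul_hankelDetPolynomial, coeff_det_hankelMatrix r fun n ↦
    natDegree_X_pow_mul_fwdDiff_iter_taylor_le p n 0, ← det_hankelMatrix_const_mul]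
  simp only [coeff_X_pow_mul_fwdDiff_iter_taylor le_rfl, coeff_natDegree]

theorem degree_hankelDetPolynomial [IsDomain R] {r : ℕ} {p : R[X]} (hp : p ≠ 0)
    (hfact : (p.natDegree.factorial : R) ≠ 0) (hr : r ≤ p.natDegree + 1) :
    (hankelDetPolynomial r p).degree = (r * (p.natDegree + 1 - r) : ℕ) := by
  have coeff_ne_zero :
      (X ^ (r * (r - 1)) * hankelDetPolynomial r p).coeff (r * p.natDegree) ≠ 0 := by
    rw [coeff_X_pow_mul_hankelDetPolynomial]
    exact mul_ne_zero (pow_ne_zero r (leadingCoeff_ne_zero.mpr hp))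
      (det_hankelMatrix_descFactorial_ne_zero hfact hr)
  have ne_zero : hankelDetPolynomial r p ≠ 0 := by
    intro h
    simp [h] at coeff_ne_zero
  have degree_add : (hankelDetPolynomial r p).natDegree + r * (r - 1) = r * p.natDegree := by
    rw [← natDegree_X_pow_mul _ ne_zero]
    exact natDegree_eq_of_le_of_coeff_ne_zero
      (natDegree_X_pow_mul_hankelDetPolynomial_le r p) coeff_ne_zero
  have exponents : r * (p.natDegree + 1 - r) + r * (r - 1) = r * p.natDegree := by
    rcases r.eq_zero_or_pos with rfl | hpos
    · simp
    · rw [← mul_add]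
      congr 1
      lia
  rw [degree_eq_natDegree ne_zero, Nat.cast_inj]
  lia

end HankelDeterminant

theorem hankel_det_polynomial_is_polynomial_general {R : Type*} [CommRing R] [IsDomain R]
    (m r : ℕ) (p : R[X]) (hp : p.degree = (m : ℕ)) (hm : (m.factorial : R) ≠ 0)
    (hrm : r ≤ m + 1) :
    ∃ q : R[X], q.degree = (r * (m + 1 - r) : ℕ) ∧
      ∀ x : R, (Matrix.of fun i j : Fin r ↦ p.eval (x + i.1 + j.1)).det = q.eval x := by
  obtain rfl : p.natDegree = m := natDegree_eq_of_degree_eq_some hp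
  have p_ne_zero : p ≠ 0 := ne_zero_of_coe_le_degree hp.ge
  exact ⟨hankelDetPolynomial r p, degree_hankelDetPolynomial p_ne_zero hm hrm,
    fun x ↦ (eval_hankelDetPolynomial r p x).symm⟩

/-- If `p` is a rational polynomial of degree exactly `m` and `1 ≤ r ≤ m + 1`, then the
`r × r` Hankel determinant `det((p(x+i+j))_{i,j=0}^{r-1})` is a polynomial in the starting
index `x`, of degree exactly `r(m-r+1)`. -/
theorem hankel_det_polynomial_is_polynomial (m r : ℕ) (p : Polynomial ℚ)
    (hp : p.degree = (m : ℕ)) (hr : 1 ≤ r) (hrm : r ≤ m + 1) :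
    ∃ q : Polynomial ℚ, q.degree = (r * (m + 1 - r) : ℕ) ∧
      ∀ x : ℚ, (Matrix.of fun i j : Fin r => p.eval (x + i.1 + j.1)).det = q.eval x :=
  hankel_det_polynomial_is_polynomial_general m r p hp (mod_cast m.factorial_ne_zero) hrm
end

section
/- For all integers r ≥ 1, s ≥ 0 and k ≥ 0, one has the identity in ℚ: ⟨k+2 choose s⟩_r · ⟨k choose s⟩_r · (k+1) · (k-s+r+1) = (⟨k+1 choose s⟩_r)^2 · (k-s+1) · (k+r+1), where k-s+r+1 and k-s+1 are interpreted as integers (possibly negative). -/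
/-!
The ratio `C(n+2, s) C(n, s) / C(n+1, s)²` equals `(n+2)(n-s+1) / ((n+1)(n-s+2))`. Multiplying
these ratios over `n = k, …, k+r-1` telescopes to `(k+r+1)(k-s+1) / ((k+1)(k-s+r+1))`, while the
denominators in the Hoggatt binomials do not depend on `n` and cancel. Run as an induction on `r`,
the telescoping only ever cancels the factor `k+r+1`, so `s > k` needs no separate treatment.
-/

section Choose

variable {R : Type*} [CommRing R] (n s : ℕ)

lemma cast_choose_succ_mul_sub :
    ((n + 1).choose s : R) * ((n : R) - s + 1) = (n.choose s : R) * ((n : R) + 1) := by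
  rcases le_or_gt s (n + 1) with hs | hs
  · have h := congrArg (Nat.cast : ℕ → R) (Nat.choose_mul_succ_eq n s)
    push_cast [Nat.cast_sub hs] at h
    linear_combination -h
  · simp [Nat.choose_eq_zero_of_lt hs, Nat.choose_eq_zero_of_lt (Nat.lt_of_succ_lt hs)]

lemma cast_choose_add_two_mul_cast_choose :
    ((n + 2).choose s : R) * (n.choose s : R) * ((n : R) + 1) * ((n : R) - s + 2) =
      ((n + 1).choose s : R) ^ 2 * ((n : R) - s + 1) * ((n : R) + 2) := by
  have h₀ := cast_choose_succ_mul_sub (R := R) n s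
  have h₁ := cast_choose_succ_mul_sub (R := R) (n + 1) s
  push_cast at h₁
  linear_combination (n.choose s : R) * ((n : R) + 1) * h₁ -
    ((n + 1).choose s : R) * ((n : R) + 2) * h₀

end Choose

lemma hoggatt_one (n s : ℕ) : hoggatt 1 n s = n.choose s := by
  simp [hoggatt]

lemma hoggatt_succ (r n s : ℕ) :
    hoggatt (r + 1) n s = hoggatt r n s * ((n + r).choose s / (s + r).choose s) :=
  Finset.prod_range_succ _ r

/-- For `r ≥ 1` and `s, k ≥ 0`, the identity in `ℚ`:
`⟨k+2 choose s⟩_r · ⟨k choose s⟩_r · (k+1) · (k-s+r+1)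
  = ⟨k+1 choose s⟩_r² · (k-s+1) · (k+r+1)`. -/
theorem hoggatt_shift_ratio_identity (r s k : ℕ) (hr : 1 ≤ r) :
    hoggatt r (k + 2) s * hoggatt r k s *
        ((k : ℚ) + 1) * ((k : ℚ) - s + r + 1) =
    (hoggatt r (k + 1) s) ^ 2 * ((k : ℚ) - s + 1) * ((k : ℚ) + r + 1) := by
  induction r, hr using Nat.le_induction with
  | base =>
    simp only [hoggatt_one, Nat.cast_one]
    linear_combination cast_choose_add_two_mul_cast_choose (R := ℚ) k s
  | succ r _ ih =>
    have ratio := cast_choose_add_two_mul_cast_choose (R := ℚ) (k + r) s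
    have factor_ne_zero : (k : ℚ) + r + 1 ≠ 0 := by positivity
    simp only [hoggatt_succ, add_right_comm k _ r]
    push_cast at ratio ⊢
    refine mul_right_cancel₀ factor_ne_zero ?_
    linear_combination
      hoggatt r (k + 2) s * hoggatt r k s * ((k : ℚ) + 1) / ((s + r).choose s : ℚ) ^ 2 * ratio +
      ((k + r + 1).choose s / (s + r).choose s : ℚ) ^ 2 * ((k : ℚ) + r + 2) * ih
end

section
/- For all integers r ≥ 1 and m ≥ r - 1, the Hankel determinant at the first nonzero index satisfies d_{m-r+1}(m, r) = det((C(m-r+1+i+j, m))_{i,j=0}^{r-1}) = (-1)^{r(r-1)/2}. -/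
/-!
`C(m - r + 1 + i + j, m)` vanishes for `i + j < r - 1` and equals `1` for `i + j = r - 1`, so the
matrix is triangular with respect to its antidiagonal. Reversing the order of the columns makes it
lower unitriangular, and the determinant is the sign of the reversal, which inverts all
`r(r-1)/2` pairs.
-/

open Equiv Matrix

theorem sign_fin_revPerm (n : ℕ) :
    Perm.sign (Fin.revPerm : Perm (Fin n)) = (-1) ^ (n * (n - 1) / 2) := by
  have every_pair_inverted (j : Fin n) :
      ∏ i ∈ Finset.Iio j, (if Fin.revPerm i < Fin.revPerm j then 1 else -1 : ℤˣ) =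
        (-1) ^ (j : ℕ) := by
    rw [← Fin.card_Iio j]
    refine Finset.prod_eq_pow_card fun i hi ↦ if_neg ?_
    simpa using (Finset.mem_Iio.1 hi).le
  calc Perm.sign (Fin.revPerm : Perm (Fin n))
      = ∏ j : Fin n, (-1) ^ (j : ℕ) := by
        simp only [Perm.sign_eq_prod_prod_Iio, every_pair_inverted]
    _ = (-1) ^ (n * (n - 1) / 2) := by
        rw [Finset.prod_pow_eq_pow_sum, Fin.sum_univ_eq_sum_range (fun j ↦ j),
          Finset.sum_range_id]

section CommRing

variable {R : Type*} [CommRing R] {n : ℕ}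

theorem det_of_forall_lt_rev_eq_zero (A : Matrix (Fin n) (Fin n) R)
    (hA : ∀ i j, i < j.rev → A i j = 0) :
    A.det = (-1) ^ (n * (n - 1) / 2) * ∏ i, A i i.rev := by
  have reversed_lowerTriangular : (A.submatrix id Fin.revPerm).IsLowerTriangular :=
    fun i j hij ↦ hA i j.rev (by simpa using hij)
  have det_reversed : (A.submatrix id Fin.revPerm).det = ∏ i, A i i.rev :=
    det_of_isLowerTriangular _ reversed_lowerTriangular
  rw [← det_reversed, det_permute', sign_fin_revPerm, ← mul_assoc]
  simp [← mul_pow]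

theorem det_hankel_of_forall_lt_eq_zero (a : ℕ → R) (ha : ∀ k < n - 1, a k = 0) :
    (of fun i j : Fin n ↦ a (i + j)).det = (-1) ^ (n * (n - 1) / 2) * a (n - 1) ^ n := by
  have antidiagonal (i : Fin n) : a (i + i.rev) = a (n - 1) := by
    congr 1
    rw [Fin.val_rev]
    omega
  rw [det_of_forall_lt_rev_eq_zero]
  · simp [antidiagonal, -Fin.val_rev]
  · intro i j hij
    rw [Fin.lt_def, Fin.val_rev] at hij
    exact ha _ (by omega)

theorem hankel_det_pascal_column_first_nonzero_general (r m : ℕ) (hm : r ≤ m + 1) :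
    (of fun i j : Fin r ↦ ((m + 1 - r + i + j).choose m : R)).det =
      (-1) ^ (r * (r - 1) / 2) := by
  have above_antidiagonal (k : ℕ) (hk : k < r - 1) : ((m + 1 - r + k).choose m : R) = 0 := by
    rw [Nat.choose_eq_zero_of_lt (by omega), Nat.cast_zero]
  have on_antidiagonal : ((m + 1 - r + (r - 1)).choose m : R) ^ r = 1 := by
    rcases r.eq_zero_or_pos with rfl | hr
    · exact pow_zero _
    · rw [show m + 1 - r + (r - 1) = m by omega, Nat.choose_self, Nat.cast_one, one_pow]
  simp only [add_assoc (m + 1 - r)]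
  rw [det_hankel_of_forall_lt_eq_zero (fun k ↦ ((m + 1 - r + k).choose m : R))
    above_antidiagonal, on_antidiagonal, mul_one]

end CommRing

/-- For `r ≥ 1` and `m ≥ r - 1`, the Hankel determinant at the first nonzero index
satisfies `d_{m-r+1}(m,r) = det((C(m-r+1+i+j, m))_{i,j=0}^{r-1}) = (-1)^{r(r-1)/2}`. -/
theorem hankel_det_pascal_column_first_nonzero (r m : ℕ) (hr : 1 ≤ r) (hm : r - 1 ≤ m) :
    (Matrix.of fun i j : Fin r => ((m + 1 - r + i.1 + j.1).choose m : ℚ)).det =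
      (-1 : ℚ) ^ (r * (r - 1) / 2) :=
  hankel_det_pascal_column_first_nonzero_general r m (Nat.sub_le_iff_le_add.1 hm)
end
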